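/- For every n ≥ 2, the number of permutations π ∈ S_n that avoid the generalized pattern 1-32 and satisfy π_n = 1 equals the Bell number B_{n-1}; and for every k with 2 ≤ k ≤ n, the number of permutations π ∈ S_n that avoid 1-32 and satisfy π_n = k equals ∇^{n-k}(B_{n-1}) = Σ_{i=0}^{n-k} (-1)^i · C(n-k, i) · B_{n-1-i}. -/

import Mathlib

/-!
In a permutation `π` avoiding 1-32, every descent bottom is a left-to-right minimum. Cutting `π`
before each left-to-right minimum therefore yields increasing blocks, each headed by its smallest
element, with decreasing heads. So `π` is the same thing as a set partition: `π` lists the elements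
`x` in increasing lexicographic order of the key `(-min [x], x)`, where `[x]` is the class of `x`
(`arrangement`, `arrangement_injective`, `exists_arrangement_eq`). The last entry of `π` is the
largest element of the class of the least element (`arrangement_last`).

It remains to count, with values shifted to `Fin (m + 1) = {0, …, m}`, the partitions for which
`k` is the largest element of the class of `0`; call this number `N m k`.
* `N m 0 = bell m`, by removing the singleton class `{0}`.
* `N m m = bell m` for `m ≥ 1`, by removing the element `m`.
* `N (m + 1) (k + 1) = N (m + 1) k + N m k` for `1 ≤ k ≤ m`: if `k` is in the class of `0`, remove
  it; otherwise exchange `k` and `k + 1`.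

The last two identities give the iterated backward difference by induction on `m - k`.
-/

/-- `π` avoids the generalized pattern 1-32. -/
def Avoids1d32 {n : ℕ} (π : Equiv.Perm (Fin n)) : Prop :=
  ¬ ∃ (i j : Fin n) (h : j.1 + 1 < n), i < j ∧ π i < π ⟨j.1 + 1, h⟩ ∧ π ⟨j.1 + 1, h⟩ < π j

/-- The `m`-th Bell number: the number of partitions of a set with `m` elements,
equivalently the number of equivalence relations (setoids) on `Fin m`. -/
noncomputable def bell (m : ℕ) : ℕ := Nat.card (Setoid (Fin m))

/-! ### Partitions and avoiding permutations -/

section Arrangement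

variable {n : ℕ}

open Classical in
/-- The least element of the class of `x`. -/
noncomputable def classMin (r : Setoid (Fin n)) (x : Fin n) : Fin n :=
  (Finset.univ.filter fun y => r x y).min' ⟨x, by simp⟩

lemma rel_classMin (r : Setoid (Fin n)) (x : Fin n) : r x (classMin r x) := by
  classical
  have := Finset.min'_mem (Finset.univ.filter fun y => r x y) ⟨x, by simp⟩
  simp only [Finset.mem_filter, Finset.mem_univ, true_and] at this
  unfold classMin
  convert this

lemma classMin_le (r : Setoid (Fin n)) {x y : Fin n} (h : r x y) : classMin r x ≤ y := by
  classical
  unfold classMin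
  exact Finset.min'_le _ _ (by simpa using h)

lemma classMin_le_self (r : Setoid (Fin n)) (x : Fin n) : classMin r x ≤ x :=
  classMin_le r (r.refl x)

lemma classMin_eq_iff (r : Setoid (Fin n)) {x y : Fin n} :
    classMin r x = classMin r y ↔ r x y := by
  constructor
  · intro h
    exact r.trans (h ▸ rel_classMin r x) (r.symm (rel_classMin r y))
  · intro h
    exact le_antisymm (classMin_le r (r.trans h (rel_classMin r y)))
      (classMin_le r (r.trans (r.symm h) (rel_classMin r x)))

lemma classMin_classMin (r : Setoid (Fin n)) (x : Fin n) :
    classMin r (classMin r x) = classMin r x :=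
  (classMin_eq_iff r).2 (r.symm (rel_classMin r x))

/-- The sorting key of `x`: classes come in decreasing order of their minima (hence the order
dual), and the elements of one class in increasing order. -/
noncomputable def classKey (r : Setoid (Fin n)) (x : Fin n) : (Fin n)ᵒᵈ ×ₗ Fin n :=
  toLex (OrderDual.toDual (classMin r x), x)

lemma classKey_le_iff (r : Setoid (Fin n)) (x y : Fin n) :
    classKey r x ≤ classKey r y ↔
      classMin r y < classMin r x ∨ (classMin r x = classMin r y ∧ x ≤ y) := by
  simp [classKey, Prod.Lex.toLex_le_toLex]

/-- The permutation listing the classes of `r` by decreasing minima, each class increasingly. -/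
noncomputable def arrangement (r : Setoid (Fin n)) : Equiv.Perm (Fin n) :=
  Tuple.sort (classKey r)

lemma arrangement_le (r : Setoid (Fin n)) {i j : Fin n} (h : i ≤ j) :
    classMin r (arrangement r j) < classMin r (arrangement r i) ∨
      (classMin r (arrangement r i) = classMin r (arrangement r j) ∧
        arrangement r i ≤ arrangement r j) :=
  (classKey_le_iff r _ _).1 (Tuple.monotone_sort (classKey r) h)

lemma classMin_arrangement_le (r : Setoid (Fin n)) {i j : Fin n} (h : i ≤ j) :
    classMin r (arrangement r j) ≤ classMin r (arrangement r i) := by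
  rcases arrangement_le r h with h | h
  · exact h.le
  · exact h.1.ge

/-- The minimum of a class is listed no later than the other elements of the class. -/
lemma arrangement_symm_classMin_le (r : Setoid (Fin n)) (j : Fin n) :
    (arrangement r).symm (classMin r (arrangement r j)) ≤ j := by
  by_contra! h
  rcases arrangement_le r h.le with h' | h'
  · simp [classMin_classMin] at h'
  · have h2 := h'.2
    rw [Equiv.apply_symm_apply] at h2
    have h3 := le_antisymm h2 (classMin_le_self r _)
    rw [← h3] at h
    simp at h

lemma avoids_arrangement (r : Setoid (Fin n)) : Avoids1d32 (arrangement r) := by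
  rintro ⟨i, j, h, hij, h1, h2⟩
  set j' : Fin n := ⟨j.1 + 1, h⟩ with hj'
  have hjj' : j < j' := by simp [Fin.lt_def, hj']
  have hlt : classMin r (arrangement r j') < classMin r (arrangement r j) := by
    rcases arrangement_le r hjj'.le with h' | h'
    · exact h'
    · exact absurd h'.2 (not_le.2 h2)
  -- a descent bottom is the minimum of its class: otherwise that minimum would be listed
  -- by position `j`, where all class minima are larger
  have hmin : classMin r (arrangement r j') = arrangement r j' := by
    have hle := arrangement_symm_classMin_le r j'
    rcases hle.eq_or_lt with he | hl
    · exact (Equiv.symm_apply_eq _).1 he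
    · exfalso
      have hl' : (arrangement r).symm (classMin r (arrangement r j')) ≤ j := by
        rw [Fin.lt_def] at hl
        rw [Fin.le_def]
        simp only [hj'] at hl ⊢
        omega
      have := classMin_arrangement_le r hl'
      rw [Equiv.apply_symm_apply, classMin_classMin] at this
      exact absurd hlt (not_lt.2 this)
  have h3 := classMin_arrangement_le r hij.le
  have h4 := classMin_le_self r (arrangement r i)
  rw [hmin] at hlt
  exact absurd h1 (not_lt.2 ((hlt.le.trans h3).trans h4))

/-- The class minima are the prefix minima of the arrangement, so the arrangement determines the
partition. -/
lemma isLeast_classMin_arrangement (r : Setoid (Fin n)) (j : Fin n) :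
    IsLeast {y | ∃ i ≤ j, arrangement r i = y} (classMin r (arrangement r j)) := by
  refine ⟨⟨_, arrangement_symm_classMin_le r j, by simp⟩, ?_⟩
  rintro _ ⟨i, hi, rfl⟩
  exact (classMin_arrangement_le r hi).trans (classMin_le_self r _)

lemma arrangement_injective : Function.Injective (arrangement (n := n)) := by
  intro r s h
  have key : ∀ x, classMin r x = classMin s x := by
    intro x
    obtain ⟨j, rfl⟩ := (arrangement r).surjective x
    have h1 := isLeast_classMin_arrangement r j
    have h2 := isLeast_classMin_arrangement s j
    rw [← h] at h2
    exact h1.unique h2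
  ext x y
  rw [← classMin_eq_iff r, ← classMin_eq_iff s, key, key]

open Classical in
/-- The minimum of the entries of `π` up to position `j`. -/
noncomputable def prefixMin (π : Equiv.Perm (Fin n)) (j : Fin n) : Fin n :=
  ((Finset.Iic j).image π).min' ⟨π j, Finset.mem_image_of_mem _ (by simp)⟩

lemma prefixMin_le (π : Equiv.Perm (Fin n)) {i j : Fin n} (h : i ≤ j) : prefixMin π j ≤ π i := by
  classical
  unfold prefixMin
  exact Finset.min'_le _ _ (Finset.mem_image_of_mem _ (by simpa using h))

lemma exists_prefixMin (π : Equiv.Perm (Fin n)) (j : Fin n) : ∃ i ≤ j, π i = prefixMin π j := by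
  classical
  have := Finset.min'_mem ((Finset.Iic j).image π) ⟨π j, Finset.mem_image_of_mem _ (by simp)⟩
  simp only [Finset.mem_image, Finset.mem_Iic] at this
  obtain ⟨i, hi, h⟩ := this
  refine ⟨i, hi, h.trans ?_⟩
  unfold prefixMin
  congr

lemma prefixMin_anti (π : Equiv.Perm (Fin n)) {i j : Fin n} (h : i ≤ j) :
    prefixMin π j ≤ prefixMin π i := by
  obtain ⟨k, hk, e⟩ := exists_prefixMin π i
  exact e ▸ prefixMin_le π (hk.trans h)

/-- In an avoiding permutation the entries increase as long as the prefix minimum is constant. -/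
lemma le_of_prefixMin_eq {π : Equiv.Perm (Fin n)} (hπ : Avoids1d32 π) {i : Fin n} (d : ℕ) :
    ∀ h : i.1 + d < n, prefixMin π i = prefixMin π ⟨i.1 + d, h⟩ → π i ≤ π ⟨i.1 + d, h⟩ := by
  induction d with
  | zero => intro h _; exact le_rfl
  | succ d ih =>
    intro h e
    have hd : i.1 + d < n := by omega
    have e1 : prefixMin π ⟨i.1 + (d + 1), h⟩ ≤ prefixMin π ⟨i.1 + d, hd⟩ :=
      prefixMin_anti π (by simp [Fin.le_def])
    have e2 : prefixMin π ⟨i.1 + d, hd⟩ ≤ prefixMin π i :=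
      prefixMin_anti π (by simp [Fin.le_def])
    have e3 := ih hd (le_antisymm (e ▸ e1) e2)
    refine e3.trans ?_
    by_contra! hlt
    obtain ⟨a, ha, hae⟩ := exists_prefixMin π i
    have hane : a ≠ ⟨i.1 + (d + 1), h⟩ := by
      rintro rfl
      simp [Fin.le_def] at ha
    have hlt1 : π a < π ⟨i.1 + (d + 1), h⟩ := by
      refine lt_of_le_of_ne ?_ (fun h' => hane (π.injective h'))
      rw [hae, e]
      exact prefixMin_le π le_rfl
    refine hπ ⟨a, ⟨i.1 + d, hd⟩, h, ?_, hlt1, hlt⟩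
    refine lt_of_le_of_ne (ha.trans (by simp [Fin.le_def])) ?_
    intro h'
    rw [h'] at hlt1
    exact lt_asymm hlt hlt1

/-- Every avoiding permutation is the arrangement of a partition: put two values in the same class
when the prefix minima of `π` at their positions agree. -/
lemma exists_arrangement_eq {π : Equiv.Perm (Fin n)} (hπ : Avoids1d32 π) :
    ∃ r, arrangement r = π := by
  let r : Setoid (Fin n) := Setoid.ker fun x => prefixMin π (π.symm x)
  have hr : ∀ x y, r x y ↔ prefixMin π (π.symm x) = prefixMin π (π.symm y) :=
    fun x y => Setoid.ker_def
  have hc : ∀ j, classMin r (π j) = prefixMin π j := by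
    intro j
    apply le_antisymm
    · apply classMin_le
      obtain ⟨i, hi, e⟩ := exists_prefixMin π j
      rw [← e, hr, Equiv.symm_apply_apply, Equiv.symm_apply_apply]
      refine le_antisymm (prefixMin_anti π hi) ?_
      exact e ▸ prefixMin_le π le_rfl
    · have h := (hr _ _).1 (rel_classMin r (π j))
      rw [Equiv.symm_apply_apply] at h
      rw [h]
      simpa using prefixMin_le π (le_refl (π.symm (classMin r (π j))))
  refine ⟨r, ?_⟩
  have hmono : Monotone (classKey r ∘ π) := by
    intro i j hij
    refine (classKey_le_iff r _ _).2 ?_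
    rw [hc, hc]
    rcases (prefixMin_anti π hij).lt_or_eq with h | h
    · exact Or.inl h
    · refine Or.inr ⟨h.symm, ?_⟩
      have hj : j = ⟨i.1 + (j.1 - i.1), by have := j.2; rw [Fin.le_def] at hij; omega⟩ := by
        ext; rw [Fin.le_def] at hij; simp; omega
      rw [hj] at h ⊢
      exact le_of_prefixMin_eq hπ _ _ h.symm
  have hu := Tuple.unique_monotone (Tuple.monotone_sort (classKey r)) hmono
  ext1 i
  have := congrFun hu i
  exact congrArg (fun z => (ofLex z).2) this

end Arrangement

lemma classMin_eq_zero_iff {m : ℕ} (r : Setoid (Fin (m + 1))) (x : Fin (m + 1)) :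
    classMin r x = 0 ↔ r 0 x := by
  constructor
  · intro h
    exact r.symm (h ▸ rel_classMin r x)
  · intro h
    exact le_antisymm (classMin_le r (r.symm h)) (Fin.zero_le _)

lemma arrangement_last {m : ℕ} (r : Setoid (Fin (m + 1))) :
    IsGreatest {y | r 0 y} (arrangement r (Fin.last m)) := by
  have key : ∀ y, r 0 y → r 0 (arrangement r (Fin.last m)) ∧ y ≤ arrangement r (Fin.last m) := by
    intro y hy
    have h := arrangement_le r (Fin.le_last ((arrangement r).symm y))
    rw [Equiv.apply_symm_apply, (classMin_eq_zero_iff r y).2 hy] at h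
    rcases h with h | h
    · exact absurd h (Fin.not_lt_zero _)
    · exact ⟨(classMin_eq_zero_iff r _).1 h.1.symm, h.2⟩
  exact ⟨(key 0 (r.refl 0)).1, fun y hy => (key y hy).2⟩

/-! ### Counting partitions by the largest element of the class of `0` -/

/-- The number of partitions of `{0, …, m}` in which `k` is the largest element of the class
of `0`. -/
noncomputable def zeroClassCount (m : ℕ) (k : Fin (m + 1)) : ℕ :=
  Nat.card {r : Setoid (Fin (m + 1)) // IsGreatest {y | r 0 y} k}

lemma card_avoids_eq (m : ℕ) (k : Fin (m + 1)) :
    Nat.card {π : Equiv.Perm (Fin (m + 1)) // Avoids1d32 π ∧ π (Fin.last m) = k} =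
      zeroClassCount m k := by
  symm
  refine Nat.card_congr (Equiv.ofBijective
    (fun r => ⟨arrangement r.1, avoids_arrangement r.1, (arrangement_last r.1).unique r.2⟩)
    ⟨?_, ?_⟩)
  · intro r s h
    exact Subtype.ext (arrangement_injective (congrArg Subtype.val h))
  · rintro ⟨π, hπ, hk⟩
    obtain ⟨r, rfl⟩ := exists_arrangement_eq hπ
    exact ⟨⟨r, hk ▸ arrangement_last r⟩, rfl⟩

lemma zeroClassCount_zero (m : ℕ) : zeroClassCount m 0 = bell m := by
  have hrel : ∀ r : {r : Setoid (Fin (m + 1)) // IsGreatest {y | r 0 y} 0}, ∀ x : Fin m,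
      ¬ r.1 0 x.succ := by
    intro r x h
    have := r.2.2 h
    simp at this
  refine Nat.card_congr (Equiv.ofBijective (fun r => Setoid.comap Fin.succ r.1) ⟨?_, ?_⟩)
  · intro r s h
    apply Subtype.ext
    ext x y
    refine Fin.cases ?_ (fun x => ?_) x <;> refine Fin.cases ?_ (fun y => ?_) y
    · exact iff_of_true (r.1.refl _) (s.1.refl _)
    · exact iff_of_false (hrel r y) (hrel s y)
    · exact iff_of_false (fun h => hrel r x (r.1.symm h)) (fun h => hrel s x (s.1.symm h))
    · have := congrArg (fun t : Setoid (Fin m) => t x y) h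
      simpa [Setoid.comap_rel] using this
  · intro s
    -- the partition of `{0, …, m}` whose classes are `{0}` and the shifted classes of `s`
    let f : Fin (m + 1) → Option (Quotient s) :=
      Fin.cases none fun x => some (Quotient.mk s x)
    refine ⟨⟨Setoid.ker f, ?_, ?_⟩, ?_⟩
    · exact (Setoid.ker f).refl 0
    · intro y hy
      refine Fin.cases (fun _ => le_rfl) (fun y hy => ?_) y hy
      have hy' : f 0 = f y.succ := hy
      simp [f] at hy'
    · ext x y
      rw [Setoid.comap_rel, Setoid.ker_def]
      simp only [f, Fin.cases_succ, Option.some.injEq]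
      exact Quotient.eq

/-- Partitions in which `b` is equivalent to a given other element correspond, by removing `b`, to
the partitions of the remaining elements, which `b.succAbove` enumerates. -/
lemma comap_succAbove_bijective {m : ℕ} (b : Fin (m + 2)) (a : Fin (m + 1)) :
    Function.Bijective
      (fun r : {r : Setoid (Fin (m + 2)) // r (b.succAbove a) b} =>
        Setoid.comap b.succAbove r.1) := by
  constructor
  · intro r s h
    apply Subtype.ext
    have h' : ∀ x y, r.1 (b.succAbove x) (b.succAbove y) ↔
        s.1 (b.succAbove x) (b.succAbove y) := by
      intro x y
      have := congrArg (fun t : Setoid (Fin (m + 1)) => t x y) h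
      simpa [Setoid.comap_rel] using this
    -- every element is equivalent, for both relations, to one in the range of `b.succAbove`
    have hx : ∀ x, ∃ x', r.1 x (b.succAbove x') ∧ s.1 x (b.succAbove x') := by
      intro x
      rcases Fin.eq_self_or_eq_succAbove b x with rfl | ⟨x', rfl⟩
      · exact ⟨a, r.1.symm r.2, s.1.symm s.2⟩
      · exact ⟨x', r.1.refl _, s.1.refl _⟩
    ext x y
    obtain ⟨x', hx1, hx2⟩ := hx x
    obtain ⟨y', hy1, hy2⟩ := hx y
    constructor
    · intro h
      exact s.1.trans hx2 (s.1.trans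
        ((h' _ _).1 (r.1.trans (r.1.symm hx1) (r.1.trans h hy1))) (s.1.symm hy2))
    · intro h
      exact r.1.trans hx1 (r.1.trans
        ((h' _ _).2 (s.1.trans (s.1.symm hx2) (s.1.trans h hy2))) (r.1.symm hy1))
  · intro s
    let f : Fin (m + 2) → Fin (m + 1) := b.insertNth (α := fun _ => Fin (m + 1)) a id
    have hf : ∀ x, f (b.succAbove x) = x := fun x => by simp [f]
    have hb : f b = a := by simp [f]
    refine ⟨⟨Setoid.comap f s, ?_⟩, ?_⟩
    · rw [Setoid.comap_rel, hf, hb]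
    · ext x y
      simp only [Setoid.comap_rel, hf]

lemma zeroClassCount_last (m : ℕ) : zeroClassCount (m + 1) (Fin.last (m + 1)) = bell (m + 1) := by
  rw [bell, ← Nat.card_congr (Equiv.ofBijective _ (comap_succAbove_bijective (Fin.last (m + 1)) 0))]
  refine Nat.card_congr (Equiv.subtypeEquivRight fun r => ?_)
  simp only [Fin.succAbove_last, Fin.castSucc_zero]
  exact ⟨fun h => h.1, fun h => ⟨h, fun y _ => Fin.le_last y⟩⟩

/-- The partitions in which `k` also lies in the class of `0` are counted by removing `k`. -/
lemma card_rel_castSucc (m : ℕ) (k : Fin (m + 1)) (hk : k ≠ 0) :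
    Nat.card {r : Setoid (Fin (m + 2)) // IsGreatest {y | r 0 y} k.succ ∧ r 0 k.castSucc} =
      zeroClassCount m k := by
  let e := Equiv.ofBijective _ (comap_succAbove_bijective k.castSucc 0)
  have hk' : k.castSucc ≠ 0 := fun h => hk (Fin.ext (by simpa using congrArg Fin.val h))
  have h0 : k.castSucc.succAbove 0 = 0 := Fin.succAbove_ne_zero_zero hk'
  have hks : k.castSucc.succAbove k = k.succ := Fin.succAbove_castSucc_self k
  have key : ∀ r : {r : Setoid (Fin (m + 2)) // r (k.castSucc.succAbove 0) k.castSucc},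
      IsGreatest {y | r.1 0 y} k.succ ↔ IsGreatest {y | e r 0 y} k := by
    intro r
    have he : ∀ y, e r 0 y ↔ r.1 0 (k.castSucc.succAbove y) := by
      intro y
      have h : ∀ z, z = 0 →
          (r.1 z (k.castSucc.succAbove y) ↔ r.1 0 (k.castSucc.succAbove y)) := by
        rintro _ rfl; rfl
      exact h _ h0
    constructor
    · rintro ⟨h1, h2⟩
      refine ⟨(he k).2 (hks ▸ h1), fun y hy => ?_⟩
      have := h2 ((he y).1 hy)
      rwa [← hks, Fin.succAbove_le_succAbove_iff] at this
    · rintro ⟨h1, h2⟩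
      refine ⟨hks ▸ (he k).1 h1, fun y hy => ?_⟩
      rcases Fin.eq_self_or_eq_succAbove k.castSucc y with rfl | ⟨y, rfl⟩
      · exact Fin.castSucc_le_succ k
      · rw [← hks, Fin.succAbove_le_succAbove_iff]
        exact h2 ((he y).2 hy)
  rw [zeroClassCount, ← Nat.card_congr (e.subtypeEquiv key)]
  refine Nat.card_congr ((Equiv.subtypeEquivRight fun r => ?_).trans
    (Equiv.subtypeSubtypeEquivSubtypeInter
      (fun r : Setoid (Fin (m + 2)) => r (k.castSucc.succAbove 0) k.castSucc)
      (fun r => IsGreatest {y | r 0 y} k.succ)).symm)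
  rw [h0, and_comm]

/-- The partitions in which `k` does not lie in the class of `0` are counted by exchanging `k`
and `k + 1`. -/
lemma card_not_rel_castSucc (m : ℕ) (k : Fin (m + 1)) (hk : k ≠ 0) :
    Nat.card {r : Setoid (Fin (m + 2)) // IsGreatest {y | r 0 y} k.succ ∧ ¬ r 0 k.castSucc} =
      zeroClassCount (m + 1) k.castSucc := by
  let w : Equiv.Perm (Fin (m + 2)) := Equiv.swap k.castSucc k.succ
  have hw : ∀ x, w (w x) = x := fun x => Equiv.swap_apply_self _ _ _
  let e : Setoid (Fin (m + 2)) ≃ Setoid (Fin (m + 2)) :=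
    { toFun := Setoid.comap w
      invFun := Setoid.comap w
      left_inv := fun r => by ext x y; simp [Setoid.comap_rel, hw]
      right_inv := fun r => by ext x y; simp [Setoid.comap_rel, hw] }
  have hk' : (0 : Fin (m + 2)) ≠ k.castSucc :=
    fun h => hk (Fin.ext (by simpa using congrArg Fin.val h.symm))
  have h0 : w 0 = 0 := Equiv.swap_apply_of_ne_of_ne hk' (Fin.succ_ne_zero k).symm
  have hl : w k.castSucc = k.succ := Equiv.swap_apply_left _ _
  have hr : w k.succ = k.castSucc := Equiv.swap_apply_right _ _
  have hlt : k.castSucc < k.succ := Fin.castSucc_lt_succ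
  refine Nat.card_congr (e.subtypeEquiv fun r => ?_)
  have he : ∀ y, e r 0 y ↔ r 0 (w y) := by
    intro y
    change Setoid.comap w r 0 y ↔ _
    rw [Setoid.comap_rel, h0]
  have hgap : ∀ y : Fin (m + 2), y ≠ k.succ → (y ≤ k.succ ↔ y ≤ k.castSucc) := by
    intro y hy
    simp only [Fin.le_def, ne_eq, Fin.ext_iff, Fin.val_succ, Fin.val_castSucc] at *
    omega
  constructor
  · rintro ⟨⟨h1, h2⟩, h3⟩
    refine ⟨(he _).2 (hl ▸ h1), fun y hy => ?_⟩
    have hy := (he y).1 hy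
    by_cases hy1 : y = k.succ
    · rw [hy1, hr] at hy
      exact absurd hy h3
    · by_cases hy2 : y = k.castSucc
      · exact hy2.le
      · rw [show w y = y from Equiv.swap_apply_of_ne_of_ne hy2 hy1] at hy
        exact (hgap y hy1).1 (h2 hy)
  · rintro ⟨h1, h2⟩
    refine ⟨⟨hl ▸ (he _).1 h1, fun y hy => ?_⟩, fun h => ?_⟩
    · by_cases hy1 : y = k.succ
      · exact hy1.le
      · by_cases hy2 : y = k.castSucc
        · exact hy2 ▸ hlt.le
        · have hwy : w y = y := Equiv.swap_apply_of_ne_of_ne hy2 hy1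
          exact (hgap y hy1).2 (h2 ((he y).2 (by rw [hwy]; exact hy)))
    · have := h2 ((he k.succ).2 (by rw [hr]; exact h))
      exact absurd hlt (not_lt.2 this)

lemma zeroClassCount_succ (m : ℕ) (k : Fin (m + 1)) (hk : k ≠ 0) :
    zeroClassCount (m + 1) k.succ = zeroClassCount (m + 1) k.castSucc + zeroClassCount m k := by
  classical
  have : Finite (Setoid (Fin (m + 2))) :=
    Finite.of_injective (fun r : Setoid (Fin (m + 2)) => fun x y => r x y)
      (fun r s h => by ext x y; exact iff_of_eq (congrFun (congrFun h x) y))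
  rw [← card_rel_castSucc m k hk, ← card_not_rel_castSucc m k hk,
    add_comm (Nat.card _) (Nat.card _), ← Nat.card_sum]
  refine Nat.card_congr ((Equiv.sumCompl
    (fun r : {r : Setoid (Fin (m + 2)) // IsGreatest {y | r 0 y} k.succ} =>
      r.1 0 k.castSucc)).symm.trans (Equiv.sumCongr ?_ ?_))
  · exact Equiv.subtypeSubtypeEquivSubtypeInter
      (fun r : Setoid (Fin (m + 2)) => IsGreatest {y | r 0 y} k.succ) (fun r => r 0 k.castSucc)
  · exact Equiv.subtypeSubtypeEquivSubtypeInter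
      (fun r : Setoid (Fin (m + 2)) => IsGreatest {y | r 0 y} k.succ) (fun r => ¬ r 0 k.castSucc)

/-! ### Iterated backward differences -/

/-- `∇^(d+1) b (m+1) = ∇^d b (m+1) - ∇^d b m`. -/
lemma sum_backward_difference_succ (b : ℕ → ℤ) (d m : ℕ) :
    ∑ i ∈ Finset.range (d + 1 + 1), (-1 : ℤ) ^ i * ((d + 1).choose i) * b (m + 1 - i) =
      ∑ i ∈ Finset.range (d + 1), (-1 : ℤ) ^ i * (d.choose i) * b (m + 1 - i) -
        ∑ i ∈ Finset.range (d + 1), (-1 : ℤ) ^ i * (d.choose i) * b (m - i) := by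
  have h : ∑ i ∈ Finset.range (d + 1), (-1 : ℤ) ^ i * (d.choose i) * b (m + 1 - i) =
      ∑ i ∈ Finset.range (d + 1 + 1), (-1 : ℤ) ^ i * (d.choose i) * b (m + 1 - i) := by
    rw [Finset.sum_range_succ _ (d + 1)]
    simp
  rw [h, Finset.sum_range_succ' _ (d + 1), Finset.sum_range_succ' _ (d + 1)]
  simp only [Nat.choose_succ_succ, Nat.add_sub_add_right, Nat.choose_zero_right]
  rw [add_sub_right_comm, ← Finset.sum_sub_distrib]
  congr 1
  refine Finset.sum_congr rfl fun i _ => ?_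
  push_cast
  ring

lemma zeroClassCount_eq_sum (d : ℕ) : ∀ (m k : ℕ) (hk : k < m + 1), k ≠ 0 → k + d = m →
    (zeroClassCount m ⟨k, hk⟩ : ℤ) =
      ∑ i ∈ Finset.range (d + 1), (-1 : ℤ) ^ i * (d.choose i) * (bell (m - i) : ℤ) := by
  induction d with
  | zero =>
    rintro m k hk hk0 rfl
    obtain ⟨k, rfl⟩ := Nat.exists_eq_succ_of_ne_zero hk0
    have h : zeroClassCount (k + 1) ⟨k + 1, hk⟩ = bell (k + 1) := zeroClassCount_last k
    simpa using h
  | succ d ih =>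
    rintro m k hk hk0 rfl
    have h := zeroClassCount_succ (k + d) ⟨k, by omega⟩ (by simpa [Fin.ext_iff] using hk0)
    have h1 := ih (k + d + 1) (k + 1) (by omega) (by omega) (by omega)
    have h2 := ih (k + d) k (by omega) hk0 rfl
    have h' : (zeroClassCount (k + d + 1) ⟨k + 1, by omega⟩ : ℤ) =
        zeroClassCount (k + d + 1) ⟨k, by omega⟩ + zeroClassCount (k + d) ⟨k, by omega⟩ := by
      exact_mod_cast h
    have h3 := sum_backward_difference_succ (fun i => (bell i : ℤ)) d (k + d)
    change (zeroClassCount (k + d + 1) ⟨k, by omega⟩ : ℤ) = _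
    change _ = ∑ i ∈ Finset.range (d + 1 + 1),
      (-1 : ℤ) ^ i * ((d + 1).choose i) * (bell (k + d + 1 - i) : ℤ)
    linarith

theorem bell_distribution (n : ℕ) (hn : 2 ≤ n) :
    Nat.card {π : Equiv.Perm (Fin n) // Avoids1d32 π ∧ π ⟨n - 1, by omega⟩ = ⟨0, by omega⟩} = bell (n - 1) ∧
    ∀ k : ℕ, (hk1 : 2 ≤ k) → (hk2 : k ≤ n) →
      (Nat.card {π : Equiv.Perm (Fin n) // Avoids1d32 π ∧ π ⟨n - 1, by omega⟩ = ⟨k - 1, by omega⟩} : ℤ) =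
        ∑ i ∈ Finset.range (n - k + 1), (-1 : ℤ) ^ i * (((n - k)).choose i) * (bell (n - 1 - i) : ℤ) := by
  obtain ⟨m, rfl⟩ : ∃ m, n = m + 1 := ⟨n - 1, by omega⟩
  constructor
  · exact (card_avoids_eq m 0).trans (zeroClassCount_zero m)
  · intro k hk1 hk2
    have h := card_avoids_eq m ⟨k - 1, by omega⟩
    have h' := zeroClassCount_eq_sum (m + 1 - k) m (k - 1) (by omega) (by omega) (by omega)
    rw [← h] at h'
    exact h'
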